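/- arXiv:1308.0881 — 2 statements merged into one kernel-verified Lean document; each statement's English description precedes it below -/
import Mathlib

section
/- Let z, s ∈ ℝ with s ≠ −1 and let f ∈ L¹(ℝ; ℂ). Then there exists u ∈ L¹(ℝ; ℂ) with ‖u‖_{L¹} ≤ |s+1|^{−1}·‖f‖_{L¹} such that for every test function φ ∈ C_c^∞(ℝ): ∫_ℝ u(p)·( −(p−z)·φ'(p) − (s+1)·φ(p) ) dp = ∫_ℝ f(p)·φ(p) dp. -/
open MeasureTheory

/-! The normalised dilations `D_t f (p) = e^{dt} f (z + e^t (p - z))` of a `d`-dimensional space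
form a group of isometries of `L¹` with generator `∂_{p - z} + d`. Hence `∂_{p - z} - s` is this
generator minus `a = s + d`, and for `a ≠ 0` it is inverted by `f ↦ ∫ k(t) D_t f dt`, where `k` is
the integrable solution of `k' + a k = -δ₀`; the `L¹` norm of `k` is `|a|⁻¹`. The equation is
checked by duality: along the reversed flow, with `h(t) = φ (z + e^{-t} (q - z))`, the test operator
becomes `h' - a h`, and `k` recovers `h(0) = φ(q)` from it. -/

section GreenKernel

open Set Filter Topology

variable {F : Type*} [NormedAddCommGroup F] [NormedSpace ℝ F] {a : ℝ}

/-- For `a ≠ 0`, the integrable solution of `k' + a k = -δ₀`, so that pairing with `k` recovers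
`h 0` from `h' - a h` for bounded `h`. It is supported on the half-line where `e^{-at}` decays. -/
noncomputable def greenKernel (a : ℝ) : ℝ → ℝ :=
  if 0 < a then (Ioi 0).indicator fun t => -Real.exp (-a * t)
  else (Iic 0).indicator fun t => Real.exp (-a * t)

lemma integrable_greenKernel (ha : a ≠ 0) : Integrable (greenKernel a) := by
  unfold greenKernel
  split_ifs with hpos
  · exact (integrableOn_exp_mul_Ioi (neg_lt_zero.2 hpos) 0).neg.integrable_indicator
      measurableSet_Ioi
  · have hneg : 0 < -a := neg_pos.2 (ha.lt_of_le (not_lt.1 hpos))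
    exact (integrableOn_exp_mul_Iic hneg 0).integrable_indicator measurableSet_Iic

lemma integral_norm_greenKernel (ha : a ≠ 0) : ∫ t, ‖greenKernel a t‖ = |a|⁻¹ := by
  unfold greenKernel
  split_ifs with hpos
  · simp only [norm_indicator_eq_indicator_norm, norm_neg, Real.norm_eq_abs, Real.abs_exp]
    rw [integral_indicator measurableSet_Ioi, integral_exp_mul_Ioi (neg_lt_zero.2 hpos),
      abs_of_pos hpos, mul_zero, Real.exp_zero, neg_div_neg_eq, one_div]
  · have hneg : a < 0 := ha.lt_of_le (not_lt.1 hpos)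
    simp only [norm_indicator_eq_indicator_norm, Real.norm_eq_abs, Real.abs_exp]
    rw [integral_indicator measurableSet_Iic, integral_exp_mul_Iic (neg_pos.2 hneg),
      abs_of_neg hneg, mul_zero, Real.exp_zero, one_div]

lemma hasDerivAt_exp_neg_mul_smul {h : ℝ → F} {g : F} {t : ℝ}
    (hh : HasDerivAt h (a • h t + g) t) :
    HasDerivAt (fun t => Real.exp (-a * t) • h t) (Real.exp (-a * t) • g) t := by
  have hexp : HasDerivAt (fun t => Real.exp (-a * t)) (Real.exp (-a * t) * (-a * 1)) t :=
    ((hasDerivAt_id t).const_mul (-a)).exp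
  refine (hexp.smul hh).congr_deriv ?_
  module

lemma tendsto_exp_mul_smul_zero {l : Filter ℝ} {b C : ℝ} {h : ℝ → F}
    (hb : Tendsto (fun t => b * t) l atBot) (hC : ∀ t, ‖h t‖ ≤ C) :
    Tendsto (fun t => Real.exp (b * t) • h t) l (𝓝 0) :=
  (Real.tendsto_exp_atBot.comp hb).zero_smul_isBoundedUnder_le
    (isBoundedUnder_of ⟨C, hC⟩)

lemma integral_greenKernel_smul [CompleteSpace F] (ha : a ≠ 0) {h g : ℝ → F} {C : ℝ}
    (hh : ∀ t, HasDerivAt h (a • h t + g t) t) (hC : ∀ t, ‖h t‖ ≤ C)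
    (hg : Integrable fun t => greenKernel a t • g t) :
    ∫ t, greenKernel a t • g t = h 0 := by
  unfold greenKernel at hg ⊢
  have hderiv (t : ℝ) := hasDerivAt_exp_neg_mul_smul (hh t)
  split_ifs at hg ⊢ with hpos
  · simp only [← indicator_smul_apply_left] at hg ⊢
    rw [integrable_indicator_iff measurableSet_Ioi] at hg
    have hlim : Tendsto (fun t => -(Real.exp (-a * t) • h t)) atTop (𝓝 0) := by
      simpa only [neg_zero] using (tendsto_exp_mul_smul_zero
        (tendsto_id.const_mul_atTop_of_neg (neg_lt_zero.2 hpos)) hC).neg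
    rw [integral_indicator measurableSet_Ioi, integral_Ioi_of_hasDerivAt_of_tendsto'
      (fun t _ => (hderiv t).neg.congr_deriv (neg_smul _ _).symm) hg hlim]
    simp
  · have hneg : 0 < -a := neg_pos.2 (ha.lt_of_le (not_lt.1 hpos))
    simp only [← indicator_smul_apply_left] at hg ⊢
    rw [integrable_indicator_iff measurableSet_Iic] at hg
    have hlim := tendsto_exp_mul_smul_zero (tendsto_id.const_mul_atBot hneg) hC
    rw [integral_indicator measurableSet_Iic, integral_Iic_of_hasDerivAt_of_tendsto'
      (fun t _ => hderiv t) hg hlim]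
    simp

end GreenKernel

section DilationFlow

variable {V : Type*} [NormedAddCommGroup V] [NormedSpace ℝ V]

/-- The flow of the vector field `p ↦ p - z`. -/
noncomputable def dilationFlow (z : V) (t : ℝ) (p : V) : V :=
  AffineMap.homothety z (Real.exp t) p

lemma dilationFlow_eq (z : V) (t : ℝ) (p : V) :
    dilationFlow z t p = Real.exp t • (p - z) + z := rfl

lemma dilationFlow_zero (z p : V) : dilationFlow z 0 p = p := by
  simp [dilationFlow]

lemma dilationFlow_neg_dilationFlow (z : V) (t : ℝ) (p : V) :
    dilationFlow z (-t) (dilationFlow z t p) = p := by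
  simp [dilationFlow, ← AffineMap.homothety_mul_apply, ← Real.exp_add]

lemma continuous_uncurry_dilationFlow (z : V) :
    Continuous fun x : ℝ × V => dilationFlow z x.1 x.2 := by
  simp only [dilationFlow_eq]
  fun_prop

lemma hasDerivAt_dilationFlow (z p : V) (t : ℝ) :
    HasDerivAt (fun t => dilationFlow z t p) (dilationFlow z t p - z) t := by
  simpa only [dilationFlow_eq, add_sub_cancel_right] using
    ((Real.hasDerivAt_exp t).smul_const (p - z)).add_const z

lemma hasDerivAt_comp_dilationFlow_neg {F : Type*} [NormedAddCommGroup F] [NormedSpace ℝ F]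
    {φ : V → F} (hφ : Differentiable ℝ φ) (z q : V) (t : ℝ) :
    HasDerivAt (fun t => φ (dilationFlow z (-t) q))
      (-fderiv ℝ φ (dilationFlow z (-t) q) (dilationFlow z (-t) q - z)) t := by
  have hflow : HasDerivAt (fun t => dilationFlow z (-t) q) (-(dilationFlow z (-t) q - z)) t := by
    simpa only [neg_one_smul] using! (hasDerivAt_dilationFlow z q (-t)).scomp t (hasDerivAt_neg t)
  simpa only [map_neg, Function.comp_def] using (hφ _).hasFDerivAt.comp_hasDerivAt t hflow

end DilationFlow

section Dilation

open Module

variable {V E : Type*} [NormedAddCommGroup V] [NormedSpace ℝ V]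
  [NormedAddCommGroup E] [NormedSpace ℝ E]

/-- The dilation of `f` about `z` by the factor `e^t`, normalised so as to act isometrically on
`L¹`. -/
noncomputable def dilate (z : V) (t : ℝ) (f : V → E) (p : V) : E :=
  Real.exp t ^ finrank ℝ V • f (dilationFlow z t p)

lemma norm_dilate (z : V) (t : ℝ) (f : V → E) (p : V) :
    ‖dilate z t f p‖ = dilate z t (fun q => ‖f q‖) p := by
  simp [dilate, norm_smul]

lemma smul_dilate (z : V) (t : ℝ) (ψ : V → ℝ) (f : V → E) (p : V) :
    ψ p • dilate z t f p = dilate z t (fun q => ψ (dilationFlow z (-t) q) • f q) p := by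
  simp only [dilate, dilationFlow_neg_dilationFlow, smul_comm (ψ p)]

variable [MeasurableSpace V] [BorelSpace V] [FiniteDimensional ℝ V]
  (μ : Measure V) [μ.IsAddHaarMeasure]

lemma quasiMeasurePreserving_dilationFlow (z : V) (t : ℝ) :
    Measure.QuasiMeasurePreserving (dilationFlow z t) μ μ :=
  (quasiMeasurePreserving_add_right μ z).comp <|
    (Measure.quasiMeasurePreserving_smul μ (Real.exp_pos t).ne').comp
      (measurePreserving_sub_right μ z).quasiMeasurePreserving

lemma integral_dilate (z : V) (t : ℝ) (f : V → E) : ∫ p, dilate z t f p ∂μ = ∫ p, f p ∂μ := by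
  have hexp : 0 < Real.exp t ^ finrank ℝ V := by positivity
  simp only [dilate, dilationFlow_eq]
  rw [integral_smul, integral_sub_right_eq_self (fun p => f (Real.exp t • p + z)) z,
    Measure.integral_comp_smul μ (fun p => f (p + z)), integral_add_right_eq_self f z,
    abs_of_pos (inv_pos.2 hexp), smul_inv_smul₀ hexp.ne']

variable {μ}

lemma integrable_dilate (z : V) (t : ℝ) {f : V → E} (hf : Integrable f μ) :
    Integrable (dilate z t f) μ :=
  (((hf.comp_add_right z).comp_smul (Real.exp_pos t).ne').comp_sub_right z).smul
    (Real.exp t ^ finrank ℝ V)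

lemma aestronglyMeasurable_uncurry_dilate (z : V) {f : V → E} (hf : AEStronglyMeasurable f μ)
    (ν : Measure ℝ) :
    AEStronglyMeasurable (fun x : ℝ × V => dilate z x.1 f x.2) (ν.prod μ) := by
  have hflow : Measure.QuasiMeasurePreserving (fun x : ℝ × V => dilationFlow z x.1 x.2)
      (ν.prod μ) μ :=
    QuasiMeasurePreserving.prod_of_right (continuous_uncurry_dilationFlow z).measurable
      (.of_forall (quasiMeasurePreserving_dilationFlow μ z))
  have hexp : Continuous fun x : ℝ × V => Real.exp x.1 ^ finrank ℝ V := by fun_prop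
  exact hexp.aestronglyMeasurable.smul (hf.comp_quasiMeasurePreserving hflow)

end Dilation

section DilationAverage

variable {V E : Type*} [NormedAddCommGroup V] [NormedSpace ℝ V] [FiniteDimensional ℝ V]
  [MeasurableSpace V] [BorelSpace V] {μ : Measure V} [μ.IsAddHaarMeasure]
  [NormedAddCommGroup E] [NormedSpace ℝ E] {k : ℝ → ℝ} {f : V → E}

/-- The average of the normalised dilations of `f` about `z`, weighted by the kernel `k`. -/
noncomputable def dilationAverage (z : V) (k : ℝ → ℝ) (f : V → E) (p : V) : E :=
  ∫ t, k t • dilate z t f p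

lemma integral_norm_smul_dilate (z : V) (k : ℝ → ℝ) (f : V → E) (t : ℝ) :
    ∫ p, ‖k t • dilate z t f p‖ ∂μ = ‖k t‖ * ∫ p, ‖f p‖ ∂μ := by
  simp only [norm_smul, norm_dilate, integral_const_mul, integral_dilate]

lemma integrable_uncurry_smul_dilate (z : V) (hk : Integrable k) (hf : Integrable f μ) :
    Integrable (fun x : ℝ × V => k x.1 • dilate z x.1 f x.2) (volume.prod μ) := by
  have hmeas : AEStronglyMeasurable (fun x : ℝ × V => k x.1 • dilate z x.1 f x.2)
      (volume.prod μ) :=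
    hk.1.comp_fst.smul (aestronglyMeasurable_uncurry_dilate z hf.1 volume)
  refine (integrable_prod_iff hmeas).2 ⟨.of_forall fun t => ?_, ?_⟩
  · exact (integrable_dilate z t hf).smul (k t)
  · simpa only [integral_norm_smul_dilate] using hk.norm.mul_const _

lemma integrable_dilationAverage (z : V) (hk : Integrable k) (hf : Integrable f μ) :
    Integrable (dilationAverage z k f) μ :=
  (integrable_uncurry_smul_dilate z hk hf).integral_prod_right

lemma integral_norm_dilationAverage_le (z : V) (hk : Integrable k) (hf : Integrable f μ) :
    ∫ p, ‖dilationAverage z k f p‖ ∂μ ≤ (∫ t, ‖k t‖) * ∫ p, ‖f p‖ ∂μ := by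
  have hint := (integrable_uncurry_smul_dilate z hk hf).norm
  calc ∫ p, ‖dilationAverage z k f p‖ ∂μ
      ≤ ∫ p, (∫ t, ‖k t • dilate z t f p‖) ∂μ :=
        integral_mono (integrable_dilationAverage z hk hf).norm hint.integral_prod_right
          fun _ => norm_integral_le_integral_norm _
    _ = ∫ t, ∫ p, ‖k t • dilate z t f p‖ ∂μ := (integral_integral_swap hint).symm
    _ = (∫ t, ‖k t‖) * ∫ p, ‖f p‖ ∂μ := by
        simp only [integral_norm_smul_dilate, integral_mul_const]

lemma integral_smul_dilationAverage [CompleteSpace E] (z : V) (hk : Integrable k)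
    (hf : Integrable f μ) {ψ : V → ℝ} (hψ : Measurable ψ) {C : ℝ} (hC : ∀ p, ‖ψ p‖ ≤ C) :
    ∫ p, ψ p • dilationAverage z k f p ∂μ
      = ∫ q, (∫ t, k t * ψ (dilationFlow z (-t) q)) • f q ∂μ := by
  have hleft : Integrable (fun x : ℝ × V => ψ x.2 • k x.1 • dilate z x.1 f x.2)
      (volume.prod μ) :=
    (integrable_uncurry_smul_dilate z hk hf).bdd_smul C
      (hψ.comp measurable_snd).aestronglyMeasurable (.of_forall fun x => hC x.2)
  have hflow : Measurable fun x : ℝ × V => dilationFlow z (-x.1) x.2 :=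
    ((continuous_uncurry_dilationFlow z).comp (continuous_fst.neg.prodMk continuous_snd)).measurable
  have hright : Integrable (fun x : ℝ × V => ψ (dilationFlow z (-x.1) x.2) • k x.1 • f x.2)
      (volume.prod μ) :=
    (hk.smul_prod hf).bdd_smul C (hψ.comp hflow).aestronglyMeasurable
      (.of_forall fun _ => hC _)
  calc ∫ p, ψ p • dilationAverage z k f p ∂μ
      = ∫ p, (∫ t, ψ p • k t • dilate z t f p) ∂μ := by
        simp only [dilationAverage, integral_smul]
    _ = ∫ t, ∫ p, ψ p • k t • dilate z t f p ∂μ := (integral_integral_swap hleft).symm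
    _ = ∫ t, ∫ q, ψ (dilationFlow z (-t) q) • k t • f q ∂μ := by
        simp only [smul_comm (ψ _) (k _), smul_dilate, integral_smul, integral_dilate]
    _ = ∫ q, (∫ t, ψ (dilationFlow z (-t) q) • k t • f q) ∂μ := integral_integral_swap hright
    _ = ∫ q, (∫ t, k t * ψ (dilationFlow z (-t) q)) • f q ∂μ := by
        simp only [smul_smul, mul_comm (ψ _), integral_smul_const]

end DilationAverage

section Solvability

open Module

variable {V : Type*} [NormedAddCommGroup V] [NormedSpace ℝ V]

/-- The formal transpose `-∂_{p - z} - a` of the operator `∂_{p - z} - s`, acting on test functions;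
here `a = s + dim V`, since `-∂_{p - z} - dim V` is the transpose of `∂_{p - z}`. -/
noncomputable def fuchsianTranspose (z : V) (a : ℝ) (φ : V → ℝ) (p : V) : ℝ :=
  -fderiv ℝ φ p (p - z) - a * φ p

variable {φ : V → ℝ}

lemma fuchsianTranspose_real (z a : ℝ) (φ : ℝ → ℝ) (p : ℝ) :
    fuchsianTranspose z a φ p = -(p - z) * deriv φ p - a * φ p := by
  rw [fuchsianTranspose, fderiv_eq_smul_deriv, smul_eq_mul, neg_mul]

lemma continuous_fuchsianTranspose (z : V) (a : ℝ) (hφ : ContDiff ℝ 1 φ) :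
    Continuous (fuchsianTranspose z a φ) :=
  ((hφ.continuous_fderiv one_ne_zero).clm_apply (continuous_id.sub continuous_const)).neg.sub
    (hφ.continuous.const_mul a)

lemma hasCompactSupport_fuchsianTranspose (z : V) (a : ℝ) (hφ : HasCompactSupport φ) :
    HasCompactSupport (fuchsianTranspose z a φ) := by
  refine hφ.mono' fun p hp => ?_
  by_contra hmem
  exact hp (by simp [fuchsianTranspose, fderiv_of_notMem_tsupport ℝ hmem,
    image_eq_zero_of_notMem_tsupport hmem])

lemma integral_greenKernel_mul_fuchsianTranspose {a : ℝ} (ha : a ≠ 0) (hφ : ContDiff ℝ 1 φ)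
    (hφc : HasCompactSupport φ) (z q : V) :
    ∫ t, greenKernel a t * fuchsianTranspose z a φ (dilationFlow z (-t) q) = φ q := by
  obtain ⟨C, hC⟩ := hφc.exists_bound_of_continuous hφ.continuous
  have hcont := continuous_fuchsianTranspose z a hφ
  obtain ⟨D, hD⟩ := (hasCompactSupport_fuchsianTranspose z a hφc).exists_bound_of_continuous hcont
  have hflow : Continuous fun t => dilationFlow z (-t) q :=
    (continuous_uncurry_dilationFlow z).comp (continuous_neg.prodMk continuous_const)
  have hode (t : ℝ) : HasDerivAt (fun t => φ (dilationFlow z (-t) q))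
      (a • φ (dilationFlow z (-t) q) + fuchsianTranspose z a φ (dilationFlow z (-t) q)) t := by
    refine (hasDerivAt_comp_dilationFlow_neg (hφ.differentiable one_ne_zero) z q t).congr_deriv ?_
    simp only [fuchsianTranspose, smul_eq_mul, add_sub_cancel]
  have hint : Integrable fun t =>
      greenKernel a t • fuchsianTranspose z a φ (dilationFlow z (-t) q) :=
    (integrable_greenKernel ha).smul_bdd D (hcont.comp hflow).aestronglyMeasurable
      (.of_forall fun _ => hD _)
  simpa only [neg_zero, dilationFlow_zero, smul_eq_mul] using
    integral_greenKernel_smul ha hode (fun _ => hC _) hint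

theorem fuchsian_L1_solvability_general {E : Type*} [NormedAddCommGroup E] [NormedSpace ℝ E]
    [CompleteSpace E] [FiniteDimensional ℝ V] [MeasurableSpace V] [BorelSpace V]
    (μ : Measure V) [μ.IsAddHaarMeasure] (z : V) (s : ℝ) (hs : s ≠ -finrank ℝ V)
    (f : V → E) (hf : Integrable f μ) :
    ∃ u : V → E, Integrable u μ ∧
      (∫ p, ‖u p‖ ∂μ) ≤ |s + finrank ℝ V|⁻¹ * ∫ p, ‖f p‖ ∂μ ∧
      ∀ φ : V → ℝ, ContDiff ℝ 1 φ → HasCompactSupport φ →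
        ∫ p, fuchsianTranspose z (s + finrank ℝ V) φ p • u p ∂μ = ∫ p, φ p • f p ∂μ := by
  have ha : s + finrank ℝ V ≠ 0 := fun h => hs (eq_neg_of_add_eq_zero_left h)
  have hk := integrable_greenKernel ha
  refine ⟨dilationAverage z (greenKernel (s + finrank ℝ V)) f,
    integrable_dilationAverage z hk hf, ?_, fun φ hφ hφc => ?_⟩
  · simpa only [integral_norm_greenKernel ha] using integral_norm_dilationAverage_le z hk hf
  · have hcont := continuous_fuchsianTranspose z (s + finrank ℝ V) hφ
    obtain ⟨C, hC⟩ :=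
      (hasCompactSupport_fuchsianTranspose z _ hφc).exists_bound_of_continuous hcont
    simp only [integral_smul_dilationAverage z hk hf hcont.measurable hC,
      integral_greenKernel_mul_fuchsianTranspose ha hφ hφc]

end Solvability

/-- distributional solvability in `L¹(ℝ;ℂ)` of the Fuchsian equation
`L_{z,s} u = (p−z)∂_p u − s·u = f` for `s ≠ −1`, with the operator norm bound
`‖u‖_{L¹} ≤ |s+1|⁻¹·‖f‖_{L¹}`.  The equation is understood by duality:
`∫ u(p)·(−(p−z)φ'(p) − (s+1)φ(p)) dp = ∫ f(p)·φ(p) dp` for all test functions `φ`. -/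
theorem fuchsian_L1_solvability (z s : ℝ) (hs : s ≠ -1)
    (f : ℝ → ℂ) (hf : Integrable f) :
    ∃ u : ℝ → ℂ, Integrable u ∧
      (∫ p, ‖u p‖) ≤ |s + 1|⁻¹ * ∫ p, ‖f p‖ ∧
      ∀ φ : ℝ → ℝ, ContDiff ℝ (⊤ : ℕ∞) φ → HasCompactSupport φ →
        ∫ p, u p * ((-(p - z) * deriv φ p - (s + 1) * φ p : ℝ) : ℂ)
          = ∫ p, f p * ((φ p : ℝ) : ℂ) := by
  obtain ⟨u, hu, hle, hsol⟩ := fuchsian_L1_solvability_general volume z s (by simpa using hs) f hf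
  refine ⟨u, hu, by simpa using hle, fun φ hφ hφc => ?_⟩
  simpa [fuchsianTranspose_real, mul_comm] using hsol φ (hφ.of_le (by simp)) hφc
end

section
/- Let z, s ∈ ℝ with s ≠ −1. For every finite complex Borel measure f on ℝ of the form f = g·λ + c·δ_z, where g ∈ L¹(ℝ; ℂ), c ∈ ℂ, λ is Lebesgue measure and δ_z is the Dirac measure at z, there exists a unique finite complex Borel measure u on ℝ such that for every test function φ ∈ C_c^∞(ℝ): ∫_ℝ ( −(p−z)·φ'(p) − (s+1)·φ(p) ) du(p) = ∫_ℝ φ df. Moreover this u has the form u = h·λ + d·δ_z with h ∈ L¹(ℝ; ℂ), d = −(s+1)^{−1}·c, and its total variation norm satisfies ‖u‖ ≤ |s+1|^{−1}·‖f‖. -/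
open MeasureTheory
open scoped Classical

/-!
Let `M φ = -(p - z)·φ' - a φ` be the transpose of the operator, where `a = s + 1`, and let
`T τ φ (p) = e^{-τ} φ(z + e^{-τ/a} (p - z))`. Then `T` is a semigroup with generator `a⁻¹ M`, and
it is exponentially decaying for the sup norm whatever the sign of `a`. Integrating
`d/dτ T τ φ = a⁻¹ T τ (M φ)` over `(0, ∞)` against a finite measure `m` gives
`m(φ) = -a⁻¹ ∫ m(T τ (M φ)) dτ`. Since `T τ M = M T τ`, a measure which kills the range of `M`
vanishes. The adjoint of `T τ` multiplies `δ_z` by `e^{-τ}` and maps `L¹` to `L¹` with norm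
`e^{-τ}`, so that `-a⁻¹ ∫ (T τ)* f dτ` solves the equation with right-hand side `f`, has the same
form as `f`, and has norm at most `|a|⁻¹ ‖f‖`.
-/

open Set Filter Topology Module
open scoped ContDiff

section Flow

variable {V : Type*} [NormedAddCommGroup V] [NormedSpace ℝ V]

/-- The flow at time `t` of the Euler vector field `p ↦ p - z`, that is, the homothety of centre `z`
and ratio `exp t`. -/
noncomputable def eulerFlow (z : V) (t : ℝ) (p : V) : V := z + Real.exp t • (p - z)

@[simp] lemma eulerFlow_zero (z p : V) : eulerFlow z 0 p = p := by simp [eulerFlow]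

@[simp] lemma eulerFlow_sub_self (z p : V) (t : ℝ) :
    eulerFlow z t p - z = Real.exp t • (p - z) := by
  simp [eulerFlow]

lemma eulerFlow_eulerFlow (z p : V) (s t : ℝ) :
    eulerFlow z s (eulerFlow z t p) = eulerFlow z (s + t) p := by
  rw [eulerFlow, eulerFlow_sub_self, smul_smul, ← Real.exp_add, eulerFlow]

@[fun_prop]
lemma continuous_eulerFlow {X : Type*} [TopologicalSpace X] {t : X → ℝ} {p : X → V} (z : V)
    (ht : Continuous t) (hp : Continuous p) : Continuous fun x ↦ eulerFlow z (t x) (p x) := by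
  unfold eulerFlow
  fun_prop

/-- The flow of the Euler field at a fixed time, as a homeomorphism. -/
noncomputable def eulerFlowHomeomorph (z : V) (t : ℝ) : V ≃ₜ V where
  toFun := eulerFlow z t
  invFun := eulerFlow z (-t)
  left_inv p := by simp [eulerFlow_eulerFlow]
  right_inv p := by simp [eulerFlow_eulerFlow]
  continuous_toFun := by fun_prop
  continuous_invFun := by fun_prop

lemma contDiff_eulerFlow {n : WithTop ℕ∞} (z : V) (t : ℝ) : ContDiff ℝ n (eulerFlow z t) := by
  unfold eulerFlow
  fun_prop

lemma hasFDerivAt_eulerFlow (z p : V) (t : ℝ) :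
    HasFDerivAt (eulerFlow z t) (Real.exp t • ContinuousLinearMap.id ℝ V) p :=
  (((hasFDerivAt_id p).sub_const z).const_smul (Real.exp t)).const_add z

lemma hasDerivAt_eulerFlow (z p : V) (t : ℝ) :
    HasDerivAt (fun t ↦ eulerFlow z t p) (eulerFlow z t p - z) t := by
  rw [eulerFlow_sub_self]
  exact ((Real.hasDerivAt_exp t).smul_const (p - z)).const_add z

/-- The formal transpose, acting on test functions, of the operator
`u ↦ div ((p - z) u) - a u`. On the line this operator is `(p - z) ∂_p u - s u` with `a = s + 1`. -/
noncomputable def fuchsianDual (z : V) (a : ℝ) (φ : V → ℝ) (p : V) : ℝ :=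
  -fderiv ℝ φ p (p - z) - a * φ p

lemma fuchsianDual_apply_center (z : V) (a : ℝ) (φ : V → ℝ) :
    fuchsianDual z a φ z = -(a * φ z) := by
  simp [fuchsianDual]

lemma fuchsianDual_real (z a : ℝ) (φ : ℝ → ℝ) (p : ℝ) :
    fuchsianDual z a φ p = -(p - z) * deriv φ p - a * φ p := by
  rw [fuchsianDual, fderiv_eq_smul_deriv, smul_eq_mul, neg_mul]

/-- The semigroup on functions generated by `a⁻¹ • fuchsianDual z a`. The time scale `-τ / a` makes
the decay rate `1` for both signs of `a`. -/
noncomputable def fuchsianSemigroup (z : V) (a τ : ℝ) (φ : V → ℝ) (p : V) : ℝ :=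
  Real.exp (-τ) * φ (eulerFlow z (-(τ / a)) p)

variable {z : V} {a : ℝ} {φ : V → ℝ}

lemma continuous_fuchsianDual (hφ : ContDiff ℝ 1 φ) : Continuous (fuchsianDual z a φ) := by
  have := hφ.continuous
  have := hφ.continuous_fderiv one_ne_zero
  unfold fuchsianDual
  fun_prop

lemma hasCompactSupport_fuchsianDual (hc : HasCompactSupport φ) :
    HasCompactSupport (fuchsianDual z a φ) :=
  hc.mono' (Function.support_subset_iff'.2 fun p hp ↦ by
    simp [fuchsianDual, image_eq_zero_of_notMem_tsupport hp, fderiv_of_notMem_tsupport (𝕜 := ℝ) hp])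

lemma exists_bound_fuchsianDual (hφ : ContDiff ℝ 1 φ) (hc : HasCompactSupport φ) :
    ∃ C, ∀ p, ‖fuchsianDual z a φ p‖ ≤ C :=
  (hasCompactSupport_fuchsianDual hc).exists_bound_of_continuous (continuous_fuchsianDual hφ)

lemma norm_fuchsianSemigroup_le {C : ℝ} (hC : ∀ p, ‖φ p‖ ≤ C) (τ : ℝ) (p : V) :
    ‖fuchsianSemigroup z a τ φ p‖ ≤ Real.exp (-τ) * C := by
  rw [fuchsianSemigroup, norm_mul, Real.norm_eq_abs, Real.abs_exp]
  gcongr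
  exact hC _

lemma contDiff_fuchsianSemigroup {n : WithTop ℕ∞} (hφ : ContDiff ℝ n φ) (τ : ℝ) :
    ContDiff ℝ n (fuchsianSemigroup z a τ φ) :=
  contDiff_const.mul (hφ.comp (contDiff_eulerFlow z _))

lemma hasCompactSupport_fuchsianSemigroup (hc : HasCompactSupport φ) (τ : ℝ) :
    HasCompactSupport (fuchsianSemigroup z a τ φ) :=
  (hc.comp_homeomorph (eulerFlowHomeomorph z _)).mul_left

lemma fuchsianDual_fuchsianSemigroup (hφ : Differentiable ℝ φ) (τ : ℝ) :
    fuchsianDual z a (fuchsianSemigroup z a τ φ) =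
      fuchsianSemigroup z a τ (fuchsianDual z a φ) := by
  ext p
  have hderiv := ((hφ (eulerFlow z (-(τ / a)) p)).hasFDerivAt.comp p
    (hasFDerivAt_eulerFlow z p (-(τ / a)))).const_mul (Real.exp (-τ))
  rw [fuchsianDual, show fderiv ℝ (fuchsianSemigroup z a τ φ) p = _ from hderiv.fderiv]
  simp only [fuchsianSemigroup, fuchsianDual, ContinuousLinearMap.comp_smulₛₗ, Real.ringHom_apply,
    ContinuousLinearMap.comp_id, smul_apply, map_sub, smul_eq_mul, eulerFlow_sub_self, map_smul]
  ring

lemma hasDerivAt_fuchsianSemigroup (ha : a ≠ 0) (hφ : Differentiable ℝ φ) (τ : ℝ) (p : V) :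
    HasDerivAt (fun τ ↦ fuchsianSemigroup z a τ φ p)
      (a⁻¹ * fuchsianSemigroup z a τ (fuchsianDual z a φ) p) τ := by
  have htime : HasDerivAt (fun τ ↦ -(τ / a)) (-(1 / a)) τ := ((hasDerivAt_id τ).div_const a).neg
  have hflow : HasDerivAt (fun τ ↦ eulerFlow z (-(τ / a)) p)
      (-(1 / a) • (eulerFlow z (-(τ / a)) p - z)) τ :=
    HasDerivAt.scomp (g₁ := fun t ↦ eulerFlow z t p) τ (hasDerivAt_eulerFlow z p _) htime
  refine ((hasDerivAt_neg τ).exp.mul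
    ((hφ _).hasFDerivAt.comp_hasDerivAt τ hflow)).congr_deriv ?_
  simp only [fuchsianSemigroup, fuchsianDual, Function.comp_apply, map_smul, smul_eq_mul]
  field_simp
  ring

end Flow

section Pairing

variable {V E : Type*} [NormedAddCommGroup V] [NormedSpace ℝ V]
  [MeasurableSpace V] [NormedAddCommGroup E]
  [NormedSpace ℝ E] {κ : Measure V} {G : V → E} {z : V} {a : ℝ} {φ : V → ℝ}

lemma norm_integral_fuchsianSemigroup_smul_le {C : ℝ} (hC : ∀ p, ‖φ p‖ ≤ C)
    (hG : Integrable G κ) (τ : ℝ) :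
    ‖∫ p, fuchsianSemigroup z a τ φ p • G p ∂κ‖ ≤ Real.exp (-τ) * (C * ∫ p, ‖G p‖ ∂κ) := by
  rw [← mul_assoc, ← integral_const_mul]
  refine norm_integral_le_of_norm_le (hG.norm.const_mul _) (ae_of_all _ fun p ↦ ?_)
  rw [norm_smul]
  gcongr
  exact norm_fuchsianSemigroup_le hC τ p

variable [OpensMeasurableSpace V]

lemma integrable_fuchsianSemigroup_smul (hφ : Continuous φ) {C : ℝ} (hC : ∀ p, ‖φ p‖ ≤ C)
    (hG : Integrable G κ) (τ : ℝ) :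
    Integrable (fun p ↦ fuchsianSemigroup z a τ φ p • G p) κ := by
  refine hG.bdd_smul (Real.exp (-τ) * C) (Continuous.aestronglyMeasurable ?_)
    (ae_of_all _ (norm_fuchsianSemigroup_le hC τ))
  exact (contDiff_fuchsianSemigroup (n := 0) (contDiff_zero.2 hφ) τ).continuous

lemma integrable_fuchsianDual_smul (hG : Integrable G κ) (hφ : ContDiff ℝ 1 φ)
    (hc : HasCompactSupport φ) : Integrable (fun p ↦ fuchsianDual z a φ p • G p) κ := by
  obtain ⟨C, hC⟩ := exists_bound_fuchsianDual (z := z) (a := a) hφ hc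
  exact hG.bdd_smul C (continuous_fuchsianDual hφ).aestronglyMeasurable (ae_of_all _ hC)

lemma integrableOn_integral_fuchsianSemigroup_smul (hφ : Continuous φ) {C : ℝ}
    (hC : ∀ p, ‖φ p‖ ≤ C) (hG : Integrable G κ) :
    IntegrableOn (fun τ ↦ ∫ p, fuchsianSemigroup z a τ φ p • G p ∂κ) (Ioi 0) := by
  have hcont : Continuous fun τ ↦ ∫ p, φ (eulerFlow z (-(τ / a)) p) • G p ∂κ := by
    refine continuous_of_dominated (bound := fun p ↦ C * ‖G p‖) (fun τ ↦ ?_)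
      (fun τ ↦ ae_of_all _ fun p ↦ ?_) (hG.norm.const_mul C) (ae_of_all _ fun p ↦ by fun_prop)
    · exact (Continuous.aestronglyMeasurable (by fun_prop)).smul hG.1
    · rw [norm_smul]
      gcongr
      exact hC _
  have hmeas : AEStronglyMeasurable (fun τ ↦ ∫ p, fuchsianSemigroup z a τ φ p • G p ∂κ)
      (volume.restrict (Ioi 0)) := by
    simp only [fuchsianSemigroup, mul_smul, integral_smul]
    exact Continuous.aestronglyMeasurable (by fun_prop)
  exact ((integrableOn_exp_neg_Ioi 0).mul_const _).mono' hmeas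
    (ae_of_all _ (norm_integral_fuchsianSemigroup_smul_le hC hG))

lemma hasDerivAt_integral_fuchsianSemigroup_smul (ha : a ≠ 0) (hφ : ContDiff ℝ 1 φ)
    (hc : HasCompactSupport φ) (hG : Integrable G κ) (τ : ℝ) :
    HasDerivAt (fun τ ↦ ∫ p, fuchsianSemigroup z a τ φ p • G p ∂κ)
      (a⁻¹ • ∫ p, fuchsianSemigroup z a τ (fuchsianDual z a φ) p • G p ∂κ) τ := by
  obtain ⟨D, hD⟩ := hc.exists_bound_of_continuous hφ.continuous
  obtain ⟨C, hC⟩ := exists_bound_fuchsianDual (z := z) (a := a) hφ hc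
  have hint {ψ : V → ℝ} (hψ : Continuous ψ) {B : ℝ} (hB : ∀ p, ‖ψ p‖ ≤ B) (t : ℝ) :
      Integrable (fun p ↦ fuchsianSemigroup z a t ψ p • G p) κ :=
    integrable_fuchsianSemigroup_smul hψ hB hG t
  rw [← integral_smul]
  refine (hasDerivAt_integral_of_dominated_loc_of_deriv_le (Ioi_mem_nhds (sub_one_lt τ))
    (F' := fun t p ↦ a⁻¹ • fuchsianSemigroup z a t (fuchsianDual z a φ) p • G p)
    (bound := fun p ↦ |a⁻¹| * (Real.exp (-(τ - 1)) * C * ‖G p‖))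
    (Eventually.of_forall fun t ↦ (hint hφ.continuous hD t).1) (hint hφ.continuous hD τ)
    ((hint (continuous_fuchsianDual hφ) hC τ).smul a⁻¹).1 (ae_of_all _ fun p t ht ↦ ?_)
    ((hG.norm.const_mul _).const_mul _) (ae_of_all _ fun p t _ ↦ ?_)).2
  · rw [norm_smul, norm_smul, Real.norm_eq_abs a⁻¹]
    have hC_nonneg : 0 ≤ C := (norm_nonneg _).trans (hC p)
    gcongr
    refine (norm_fuchsianSemigroup_le hC t p).trans ?_
    gcongr
    exact (mem_Ioi.1 ht).le
  · rw [smul_smul]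
    exact (hasDerivAt_fuchsianSemigroup ha (hφ.differentiable one_ne_zero) t p).smul_const (G p)

theorem integral_smul_eq_integral_fuchsianSemigroup [CompleteSpace E] (ha : a ≠ 0)
    (hφ : ContDiff ℝ 1 φ) (hc : HasCompactSupport φ) (hG : Integrable G κ) :
    ∫ p, φ p • G p ∂κ =
      -(a⁻¹ • ∫ τ in Ioi 0, ∫ p, fuchsianSemigroup z a τ (fuchsianDual z a φ) p • G p ∂κ) := by
  obtain ⟨D, hD⟩ := hc.exists_bound_of_continuous hφ.continuous
  obtain ⟨C, hC⟩ := exists_bound_fuchsianDual (z := z) (a := a) hφ hc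
  have hlim : Tendsto (fun τ ↦ ∫ p, fuchsianSemigroup z a τ φ p • G p ∂κ) atTop (𝓝 0) :=
    squeeze_zero_norm (norm_integral_fuchsianSemigroup_smul_le hD hG)
      (by simpa using Real.tendsto_exp_neg_atTop_nhds_zero.mul_const (D * ∫ p, ‖G p‖ ∂κ))
  have hftc := integral_Ioi_of_hasDerivAt_of_tendsto'
    (fun τ _ ↦ hasDerivAt_integral_fuchsianSemigroup_smul (z := z) ha hφ hc hG τ)
    ((integrableOn_integral_fuchsianSemigroup_smul (continuous_fuchsianDual hφ) hC hG).smul a⁻¹)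
    hlim
  rw [← integral_smul, hftc]
  simp [fuchsianSemigroup]

end Pairing

section Transport

variable {V E : Type*} [NormedAddCommGroup V] [NormedSpace ℝ V] [FiniteDimensional ℝ V]
  [MeasurableSpace V] [BorelSpace V] [NormedAddCommGroup E] [NormedSpace ℝ E]
  (μ : Measure V) [μ.IsAddHaarMeasure] {g : V → E} {z : V} {a : ℝ}

lemma map_eulerFlow (z : V) (t : ℝ) :
    μ.map (eulerFlow z t) = ENNReal.ofReal (Real.exp (-(finrank ℝ V * t))) • μ := by
  have hflow : eulerFlow z t = (fun p ↦ z + p) ∘ (fun p ↦ Real.exp t • p) ∘ fun p ↦ -z + p := by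
    ext p
    simp [eulerFlow, neg_add_eq_sub]
  rw [hflow, ← Measure.map_map (by fun_prop) (by fun_prop),
    ← Measure.map_map (by fun_prop) (by fun_prop), map_add_left_eq_self μ (-z),
    Measure.map_addHaar_smul μ (Real.exp_pos t).ne', Measure.map_smul, map_add_left_eq_self,
    ← Real.exp_nat_mul, ← Real.exp_neg, Real.abs_exp]

lemma quasiMeasurePreserving_eulerFlow (z : V) (t : ℝ) :
    Measure.QuasiMeasurePreserving (eulerFlow z t) μ μ :=
  ⟨(eulerFlowHomeomorph z t).measurable, by
    rw [map_eulerFlow]; exact Measure.smul_absolutelyContinuous⟩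

/-- The density of the image under `eulerFlow z t` of the measure of density `g` with respect to a
Haar measure. -/
noncomputable def eulerTransport (z : V) (t : ℝ) (g : V → E) (q : V) : E :=
  Real.exp (-(finrank ℝ V * t)) • g (eulerFlow z (-t) q)

variable {μ}

lemma integrable_eulerTransport (hg : Integrable g μ) (t : ℝ) :
    Integrable (eulerTransport z t g) μ := by
  have hmap : Integrable g (μ.map (eulerFlow z (-t))) := by
    rw [map_eulerFlow]
    exact hg.smul_measure ENNReal.ofReal_ne_top
  exact (hmap.comp_measurable (eulerFlowHomeomorph z (-t)).measurable).smul
    (Real.exp (-(finrank ℝ V * t)))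

lemma integral_eulerTransport (g : V → E) (t : ℝ) :
    ∫ q, eulerTransport z t g q ∂μ = ∫ p, g p ∂μ := by
  have hmap := (eulerFlowHomeomorph z (-t)).measurableEmbedding.integral_map (μ := μ) g
  change ∫ p, g p ∂(μ.map (eulerFlow z (-t))) = ∫ q, g (eulerFlow z (-t) q) ∂μ at hmap
  simp only [eulerTransport]
  rw [integral_smul, ← hmap, map_eulerFlow, integral_smul_measure,
    ENNReal.toReal_ofReal (Real.exp_pos _).le, smul_smul, ← Real.exp_add]
  simp

lemma integral_norm_eulerTransport (g : V → E) (t : ℝ) :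
    ∫ q, ‖eulerTransport z t g q‖ ∂μ = ∫ p, ‖g p‖ ∂μ := by
  rw [← integral_eulerTransport (z := z) (fun p ↦ ‖g p‖) t]
  simp [eulerTransport, norm_smul]

lemma integral_smul_eulerTransport (f : V → ℝ) (g : V → E) (t : ℝ) :
    ∫ q, f q • eulerTransport z t g q ∂μ = ∫ p, f (eulerFlow z t p) • g p ∂μ := by
  rw [← integral_eulerTransport (z := z) (fun p ↦ f (eulerFlow z t p) • g p) t]
  simp [eulerTransport, eulerFlow_eulerFlow, smul_comm (f _)]

lemma integrable_exp_smul_eulerTransport (hg : Integrable g μ) (z : V) (a : ℝ) :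
    Integrable (fun x : V × ℝ ↦ Real.exp (-x.2) • eulerTransport z (-(x.2 / a)) g x.1)
      (μ.prod (volume.restrict (Ioi 0))) := by
  have hflow : Measure.QuasiMeasurePreserving (fun x : V × ℝ ↦ eulerFlow z (- -(x.2 / a)) x.1)
      (μ.prod (volume.restrict (Ioi 0))) μ :=
    QuasiMeasurePreserving.prod_of_left (Continuous.measurable (by fun_prop))
      (ae_of_all _ fun τ ↦ quasiMeasurePreserving_eulerFlow μ z (- -(τ / a)))
  have hmeas : AEStronglyMeasurable
      (fun x : V × ℝ ↦ Real.exp (-x.2) • eulerTransport z (-(x.2 / a)) g x.1)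
      (μ.prod (volume.restrict (Ioi 0))) := by
    refine (Continuous.aestronglyMeasurable (by fun_prop)).smul
      ((Continuous.aestronglyMeasurable (by fun_prop)).smul ?_)
    exact hg.1.comp_quasiMeasurePreserving hflow
  refine (integrable_prod_iff' hmeas).2
    ⟨ae_of_all _ fun τ ↦ (integrable_eulerTransport (z := z) hg (-(τ / a))).smul (Real.exp (-τ)),
      ?_⟩
  simpa only [norm_smul, Real.norm_eq_abs, Real.abs_exp, integral_const_mul,
    integral_norm_eulerTransport] using (integrableOn_exp_neg_Ioi 0).mul_const (∫ p, ‖g p‖ ∂μ)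

/-- The density `h` for which `h • μ` is mapped to `g • μ` by the operator with transpose
`fuchsianDual z a`. -/
noncomputable def fuchsianInverse (z : V) (a : ℝ) (g : V → E) (q : V) : E :=
  -(a⁻¹ • ∫ τ in Ioi 0, Real.exp (-τ) • eulerTransport z (-(τ / a)) g q)

lemma integrable_fuchsianInverse (hg : Integrable g μ) :
    Integrable (fuchsianInverse z a g) μ :=
  ((integrable_exp_smul_eulerTransport hg z a).integral_prod_left.smul a⁻¹).neg

theorem integral_norm_fuchsianInverse_le (hg : Integrable g μ) :
    ∫ q, ‖fuchsianInverse z a g q‖ ∂μ ≤ |a|⁻¹ * ∫ p, ‖g p‖ ∂μ := by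
  have hint := integrable_exp_smul_eulerTransport hg z a
  simp only [fuchsianInverse, norm_neg, norm_smul, norm_inv, Real.norm_eq_abs, integral_const_mul]
  refine mul_le_mul_of_nonneg_left ?_ (inv_nonneg.2 (abs_nonneg a))
  calc ∫ q, ‖∫ τ in Ioi 0, Real.exp (-τ) • eulerTransport z (-(τ / a)) g q‖ ∂μ
    _ ≤ ∫ q, (∫ τ in Ioi 0, ‖Real.exp (-τ) • eulerTransport z (-(τ / a)) g q‖) ∂μ :=
      integral_mono hint.integral_prod_left.norm hint.norm.integral_prod_left
        fun q ↦ norm_integral_le_integral_norm _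
    _ = ∫ τ in Ioi 0, ∫ q, ‖Real.exp (-τ) • eulerTransport z (-(τ / a)) g q‖ ∂μ :=
      integral_integral_swap hint.norm
    _ = ∫ τ in Ioi 0, Real.exp (-τ) * ∫ p, ‖g p‖ ∂μ := by
      simp only [norm_smul, Real.norm_eq_abs, Real.abs_exp, integral_const_mul,
        integral_norm_eulerTransport]
    _ = ∫ p, ‖g p‖ ∂μ := by rw [integral_mul_const, integral_exp_neg_Ioi_zero, one_mul]

lemma integral_smul_fuchsianInverse {f : V → ℝ} (hf : Continuous f) {C : ℝ} (hC : ∀ p, ‖f p‖ ≤ C)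
    (hg : Integrable g μ) :
    ∫ q, f q • fuchsianInverse z a g q ∂μ =
      -(a⁻¹ • ∫ τ in Ioi 0, ∫ p, fuchsianSemigroup z a τ f p • g p ∂μ) := by
  have hint : Integrable
      (fun x : V × ℝ ↦ f x.1 • Real.exp (-x.2) • eulerTransport z (-(x.2 / a)) g x.1)
      (μ.prod (volume.restrict (Ioi 0))) :=
    (integrable_exp_smul_eulerTransport hg z a).bdd_smul C
      (Continuous.aestronglyMeasurable (by fun_prop)) (ae_of_all _ fun x ↦ hC x.1)
  calc ∫ q, f q • fuchsianInverse z a g q ∂μ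
    _ = -(a⁻¹ • ∫ q, (∫ τ in Ioi 0,
          f q • Real.exp (-τ) • eulerTransport z (-(τ / a)) g q) ∂μ) := by
      simp only [fuchsianInverse, smul_neg, smul_comm (f _) a⁻¹, integral_neg, integral_smul]
    _ = -(a⁻¹ • ∫ τ in Ioi 0, ∫ q,
          f q • Real.exp (-τ) • eulerTransport z (-(τ / a)) g q ∂μ) := by
      rw [integral_integral_swap hint]
    _ = -(a⁻¹ • ∫ τ in Ioi 0, ∫ p, fuchsianSemigroup z a τ f p • g p ∂μ) := by
      simp only [fuchsianSemigroup, mul_smul, smul_comm (f _) (Real.exp _), integral_smul,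
        integral_smul_eulerTransport]

theorem integral_fuchsianDual_smul_fuchsianInverse [CompleteSpace E] (ha : a ≠ 0)
    (hg : Integrable g μ) {φ : V → ℝ} (hφ : ContDiff ℝ 1 φ) (hc : HasCompactSupport φ) :
    ∫ q, fuchsianDual z a φ q • fuchsianInverse z a g q ∂μ = ∫ p, φ p • g p ∂μ := by
  obtain ⟨C, hC⟩ := exists_bound_fuchsianDual (z := z) (a := a) hφ hc
  rw [integral_smul_fuchsianInverse (continuous_fuchsianDual hφ) hC hg,
    ← integral_smul_eq_integral_fuchsianSemigroup ha hφ hc hg]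

end Transport

section SumDensity

variable {X E : Type*} [MeasurableSpace X] [NormedAddCommGroup E] [NormedSpace ℝ E]
  (μ₁ μ₂ : Measure X) {f₁ f₂ : X → E}

/-- The density with respect to `μ₁ + μ₂` of the sum of the vector measures of density `f₁` with
respect to `μ₁` and `f₂` with respect to `μ₂`. -/
noncomputable def sumDensity (f₁ f₂ : X → E) (x : X) : E :=
  (μ₁.rnDeriv (μ₁ + μ₂) x).toReal • f₁ x + (μ₂.rnDeriv (μ₁ + μ₂) x).toReal • f₂ x

lemma smul_sumDensity (w : X → ℝ) (f₁ f₂ : X → E) (x : X) :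
    w x • sumDensity μ₁ μ₂ f₁ f₂ x =
      sumDensity μ₁ μ₂ (fun x ↦ w x • f₁ x) (fun x ↦ w x • f₂ x) x := by
  simp only [sumDensity, smul_add, smul_comm (w x)]

variable {μ₁ μ₂} [SigmaFinite μ₁] [SigmaFinite μ₂]

lemma integrable_sumDensity (h₁ : Integrable f₁ μ₁) (h₂ : Integrable f₂ μ₂) :
    Integrable (sumDensity μ₁ μ₂ f₁ f₂) (μ₁ + μ₂) :=
  ((integrable_rnDeriv_smul_iff (Measure.AbsolutelyContinuous.rfl.add_right μ₂)).2 h₁).add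
    ((integrable_rnDeriv_smul_iff (Measure.le_add_left le_rfl).absolutelyContinuous).2 h₂)

lemma setIntegral_sumDensity (h₁ : Integrable f₁ μ₁) (h₂ : Integrable f₂ μ₂) {A : Set X}
    (hA : MeasurableSet A) :
    ∫ x in A, sumDensity μ₁ μ₂ f₁ f₂ x ∂(μ₁ + μ₂) = ∫ x in A, f₁ x ∂μ₁ + ∫ x in A, f₂ x ∂μ₂ := by
  have hac₁ : μ₁ ≪ μ₁ + μ₂ := Measure.AbsolutelyContinuous.rfl.add_right μ₂
  have hac₂ : μ₂ ≪ μ₁ + μ₂ := (Measure.le_add_left le_rfl).absolutelyContinuous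
  simp only [sumDensity]
  rw [integral_add ((integrable_rnDeriv_smul_iff hac₁).2 h₁).integrableOn
    ((integrable_rnDeriv_smul_iff hac₂).2 h₂).integrableOn, setIntegral_rnDeriv_smul hac₁ hA,
    setIntegral_rnDeriv_smul hac₂ hA]

lemma integral_smul_sumDensity {w : X → ℝ} (h₁ : Integrable (fun x ↦ w x • f₁ x) μ₁)
    (h₂ : Integrable (fun x ↦ w x • f₂ x) μ₂) :
    ∫ x, w x • sumDensity μ₁ μ₂ f₁ f₂ x ∂(μ₁ + μ₂) =
      ∫ x, w x • f₁ x ∂μ₁ + ∫ x, w x • f₂ x ∂μ₂ := by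
  simpa only [smul_sumDensity, setIntegral_univ] using setIntegral_sumDensity h₁ h₂ .univ

end SumDensity

section Uniqueness

variable {V E : Type*} [NormedAddCommGroup V] [NormedSpace ℝ V] [FiniteDimensional ℝ V]
  [MeasurableSpace V] [BorelSpace V]
  [NormedAddCommGroup E] [NormedSpace ℝ E] [CompleteSpace E]
  {κ : Measure V} {G : V → E} {z : V} {a : ℝ}

theorem ae_eq_zero_of_integral_fuchsianDual_smul_eq_zero (ha : a ≠ 0) (hG : Integrable G κ)
    (h : ∀ φ : V → ℝ, ContDiff ℝ ∞ φ → HasCompactSupport φ →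
      ∫ p, fuchsianDual z a φ p • G p ∂κ = 0) :
    ∀ᵐ p ∂κ, G p = 0 := by
  refine ae_eq_zero_of_integral_contDiff_smul_eq_zero hG.locallyIntegrable fun φ hφ hc ↦ ?_
  have hφ₁ : ContDiff ℝ 1 φ := hφ.of_le (by simp)
  have hzero (τ : ℝ) : ∫ p, fuchsianSemigroup z a τ (fuchsianDual z a φ) p • G p ∂κ = 0 := by
    rw [← fuchsianDual_fuchsianSemigroup (hφ₁.differentiable one_ne_zero)]
    exact h _ (contDiff_fuchsianSemigroup hφ τ) (hasCompactSupport_fuchsianSemigroup hc τ)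
  simp [integral_smul_eq_integral_fuchsianSemigroup (z := z) ha hφ₁ hc hG, hzero]

theorem setIntegral_eq_of_integral_fuchsianDual_smul_eq {κ' : Measure V} [SigmaFinite κ]
    [SigmaFinite κ'] {G' : V → E} (ha : a ≠ 0) (hG : Integrable G κ) (hG' : Integrable G' κ')
    (h : ∀ φ : V → ℝ, ContDiff ℝ ∞ φ → HasCompactSupport φ →
      ∫ p, fuchsianDual z a φ p • G p ∂κ = ∫ p, fuchsianDual z a φ p • G' p ∂κ')
    {A : Set V} (hA : MeasurableSet A) :
    ∫ p in A, G p ∂κ = ∫ p in A, G' p ∂κ' := by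
  have hzero : ∀ᵐ p ∂(κ + κ'), sumDensity κ κ' G (-G') p = 0 := by
    refine ae_eq_zero_of_integral_fuchsianDual_smul_eq_zero (z := z) ha
      (integrable_sumDensity hG hG'.neg) fun φ hφ hc ↦ ?_
    have hφ₁ : ContDiff ℝ 1 φ := hφ.of_le (by simp)
    rw [integral_smul_sumDensity (integrable_fuchsianDual_smul hG hφ₁ hc)
      (integrable_fuchsianDual_smul hG'.neg hφ₁ hc), h φ hφ hc]
    simp [integral_neg]
  have hsum := setIntegral_sumDensity hG hG'.neg hA
  rw [integral_eq_zero_of_ae (ae_restrict_of_ae hzero)] at hsum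
  simpa [integral_neg, add_neg_eq_zero] using hsum.symm

end Uniqueness

theorem fuchsian_measure_inversion_general {V E : Type*} [NormedAddCommGroup V] [NormedSpace ℝ V]
    [FiniteDimensional ℝ V] [MeasurableSpace V] [BorelSpace V] [NormedAddCommGroup E]
    [NormedSpace ℝ E] [CompleteSpace E] (μ : Measure V) [μ.IsAddHaarMeasure] (z : V) {a : ℝ}
    (ha : a ≠ 0) {g : V → E} (hg : Integrable g μ) (c : E) :
    ∃ h : V → E, ∃ d : E, Integrable h μ ∧
      d = -a⁻¹ • c ∧
      (∫ p, ‖h p‖ ∂μ) + ‖d‖ ≤ |a|⁻¹ * ((∫ p, ‖g p‖ ∂μ) + ‖c‖) ∧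
      (∀ φ : V → ℝ, ContDiff ℝ ∞ φ → HasCompactSupport φ →
        (∫ p, fuchsianDual z a φ p • h p ∂μ) + fuchsianDual z a φ z • d =
          (∫ p, φ p • g p ∂μ) + φ z • c) ∧
      (∀ ν : Measure V, SigmaFinite ν → ∀ g' : V → E, Integrable g' ν →
        (∀ φ : V → ℝ, ContDiff ℝ ∞ φ → HasCompactSupport φ →
          ∫ p, fuchsianDual z a φ p • g' p ∂ν = (∫ p, φ p • g p ∂μ) + φ z • c) →
        ∀ A : Set V, MeasurableSet A →
          ∫ p in A, g' p ∂ν = (∫ p in A, h p ∂μ) + (if z ∈ A then d else 0)) := by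
  set h := fuchsianInverse z a g
  set d := -a⁻¹ • c with d_def
  have hh : Integrable h μ := integrable_fuchsianInverse hg
  have hd : Integrable (fun _ ↦ d) (Measure.dirac z) := integrable_const d
  have hsol (φ : V → ℝ) (hφ : ContDiff ℝ ∞ φ) (hc : HasCompactSupport φ) :
      (∫ p, fuchsianDual z a φ p • h p ∂μ) + fuchsianDual z a φ z • d =
        (∫ p, φ p • g p ∂μ) + φ z • c := by
    rw [integral_fuchsianDual_smul_fuchsianInverse ha hg (hφ.of_le (by simp)) hc,
      fuchsianDual_apply_center, smul_smul]
    congr 2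
    field_simp
  refine ⟨h, d, hh, rfl, ?_, hsol, fun ν _ g' hg' hν A hA ↦ ?_⟩
  · rw [d_def, norm_smul, norm_neg, norm_inv, Real.norm_eq_abs, mul_add]
    gcongr
    exact integral_norm_fuchsianInverse_le hg
  · have huniq := setIntegral_eq_of_integral_fuchsianDual_smul_eq (z := z) ha hg'
      (integrable_sumDensity hh hd) (fun φ hφ hc ↦ ?_) hA
    · rw [huniq, setIntegral_sumDensity hh hd hA, setIntegral_dirac]
    · have hφ₁ : ContDiff ℝ 1 φ := hφ.of_le (by simp)
      rw [hν φ hφ hc, ← hsol φ hφ hc, integral_smul_sumDensity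
        (integrable_fuchsianDual_smul hh hφ₁ hc) (integrable_fuchsianDual_smul hd hφ₁ hc),
        integral_dirac]

/-- for `s ≠ −1`, the Fuchsian operator `L_{z,s} u = (p−z)∂_p u − s·u` is a
bijection of the space `L¹(ℝ) + ℂ·δ_z` of finite complex Borel measures onto itself, with
inverse of total-variation operator norm at most `|s+1|⁻¹`.

A measure of the form `h·λ + d·δ_z` is encoded by the pair `(h, d)`; its total variation norm
is `∫‖h‖ + ‖d‖` (Lebesgue measure and `δ_z` are mutually singular).  The dual pairing of
`L_{z,s}u` with a test function `φ` is
`∫ (−(p−z)φ'(p) − (s+1)φ(p))·h(p) dp + d·(−(z−z)φ'(z) − (s+1)φ(z))`.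
Uniqueness is asserted among all finite complex Borel measures `u' = g'·ν` (every finite
complex measure has this form, `ν` a finite positive measure, `g'` a `ν`-integrable density),
equality of measures being tested on all Borel sets. -/
theorem fuchsian_measure_inversion (z s : ℝ) (hs : s ≠ -1)
    (g : ℝ → ℂ) (hg : Integrable g) (c : ℂ) :
    ∃ h : ℝ → ℂ, ∃ d : ℂ, Integrable h ∧
      d = -(((s : ℂ) + 1))⁻¹ * c ∧
      (∫ p, ‖h p‖) + ‖d‖ ≤ |s + 1|⁻¹ * ((∫ p, ‖g p‖) + ‖c‖) ∧
      (∀ φ : ℝ → ℝ, ContDiff ℝ (⊤ : ℕ∞) φ → HasCompactSupport φ →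
        (∫ p, ((-(p - z) * deriv φ p - (s + 1) * φ p : ℝ) : ℂ) * h p)
            + d * ((-(z - z) * deriv φ z - (s + 1) * φ z : ℝ) : ℂ)
          = (∫ p, ((φ p : ℝ) : ℂ) * g p) + c * ((φ z : ℝ) : ℂ)) ∧
      (∀ ν : Measure ℝ, IsFiniteMeasure ν → ∀ g' : ℝ → ℂ, Integrable g' ν →
        (∀ φ : ℝ → ℝ, ContDiff ℝ (⊤ : ℕ∞) φ → HasCompactSupport φ →
          (∫ p, ((-(p - z) * deriv φ p - (s + 1) * φ p : ℝ) : ℂ) * g' p ∂ν)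
            = (∫ p, ((φ p : ℝ) : ℂ) * g p) + c * ((φ z : ℝ) : ℂ)) →
        ∀ A : Set ℝ, MeasurableSet A →
          ∫ p in A, g' p ∂ν = (∫ p in A, h p) + (if z ∈ A then d else 0)) := by
  have ha : s + 1 ≠ 0 := fun h ↦ hs (eq_neg_of_add_eq_zero_left h)
  obtain ⟨h, d, hh, hd, hnorm, hsol, huniq⟩ :=
    fuchsian_measure_inversion_general volume z ha hg c
  refine ⟨h, d, hh, by simpa using hd, hnorm, ?_, fun ν _ ↦ ?_⟩
  · simpa only [fuchsianDual_real, Complex.real_smul, mul_comm] using hsol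
  · simpa only [fuchsianDual_real, Complex.real_smul, mul_comm] using huniq ν inferInstance
end
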